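/- arXiv:1303.1286 — 3 statements merged into one kernel-verified Lean document; each statement's English description precedes it below -/
import Mathlib

section
/- Let (W,C,F) be a model structure on a finitely bicomplete category M, and let W^G, C^G, F^G be classes of maps of M with W ⊆ W^G, C^G ⊆ C, F^G ⊆ F satisfying assumptions (1)–(8) of the ℓℓ-extension existence theorem: (1) W^G has two-out-of-three; (2) W^G, C^G, F^G closed under retracts; (3) C^G closed under composition and pushout; (4) ∅ → X is in C^G iff X is cofibrant; (5) every cofibrant X admits a factorization X ⊔ X → Cyl X → X of the fold map with first map in C^G and second in W^G; (6) W is closed under pushout along maps in C^G between cofibrant objects; (7) maps in C^G ∩ W^G have the left lifting property with respect to maps in F^G; (8) every map factors as a map in C^G ∩ W^G followed by a map in F^G. Then every map f of M factors as f = q∘i with i in C^G and q in F^G ∩ W^G. -/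
/-!
Applying the factorization of `h8` to the second factor, it is enough to write `f` as a map in `CG`
followed by a map in `WG`.

When the source and target of `f : X ⟶ Y` are cofibrant, this is the mapping cylinder argument.
The pushout of `X ⨿ X ⟶ Cyl X` along `f ⨿ 𝟙` receives `X` through a map in `CG`, and `Y` through a
pushout of one end `X ⟶ Cyl X` of the cylinder. That end lies in `CG ∩ WG`, and this class is stable
under pushout because, by the retract argument, it is the class of maps with the left lifting
property against `FG` (`trivCof_pushout`). So the projection onto `Y` lies in `WG`
(`mappingCylinder_factorization`).

In general, replace `f` by a map `f'` of cofibrant objects `X' ⟶ Y'`, where `X' ⟶ X` and `Y' ⟶ Y`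
are trivial fibrations of the original model structure. Factor `f'` as `X' ⟶ Z' ⟶ Y'` and push
`X' ⟶ Z'` out along `X' ⟶ X`. By `h6` the map from `Z'` to this pushout is in `W`, so two-out-of-three
shows that the map from the pushout to `Y` is in `WG`.
-/

open CategoryTheory CategoryTheory.Limits

universe v u v' u'

namespace LLExt

variable {M : Type u} [Category.{v} M]

/-- A class of morphisms has the two-out-of-three property. -/
def TwoOutOfThree (W : MorphismProperty M) : Prop :=
  (∀ ⦃X Y Z : M⦄ (f : X ⟶ Y) (g : Y ⟶ Z), W f → W g → W (f ≫ g)) ∧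
  (∀ ⦃X Y Z : M⦄ (f : X ⟶ Y) (g : Y ⟶ Z), W f → W (f ≫ g) → W g) ∧
  (∀ ⦃X Y Z : M⦄ (f : X ⟶ Y) (g : Y ⟶ Z), W g → W (f ≫ g) → W f)

/-- A class of morphisms is closed under retracts: if `f` is a retract of `g`
(in the arrow category) and `K g`, then `K f`. -/
def ClosedUnderRetracts (K : MorphismProperty M) : Prop :=
  ∀ ⦃A B A' B' : M⦄ (f : A ⟶ B) (g : A' ⟶ B') (i : A ⟶ A') (r : A' ⟶ A)
    (i' : B ⟶ B') (r' : B' ⟶ B),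
    i ≫ r = 𝟙 A → i' ≫ r' = 𝟙 B → f ≫ i' = i ≫ g → g ≫ r' = r ≫ f → K g → K f

/-- A class of morphisms is closed under composition. -/
def ClosedUnderComposition (K : MorphismProperty M) : Prop :=
  ∀ ⦃X Y Z : M⦄ (f : X ⟶ Y) (g : Y ⟶ Z), K f → K g → K (f ≫ g)

/-- A class of morphisms is closed under pushout (cobase change). -/
def ClosedUnderPushouts (K : MorphismProperty M) : Prop :=
  ∀ ⦃Z X Y P : M⦄ (f : Z ⟶ X) (g : Z ⟶ Y) (inl : X ⟶ P) (inr : Y ⟶ P),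
    IsPushout f g inl inr → K f → K inr

/-- A class of morphisms is closed under pullback (base change). -/
def ClosedUnderPullbacks (K : MorphismProperty M) : Prop :=
  ∀ ⦃P X Y Z : M⦄ (fst : P ⟶ X) (snd : P ⟶ Y) (f : X ⟶ Z) (g : Y ⟶ Z),
    IsPullback fst snd f g → K f → K snd

/-- Left properness: the pushout of a map in `W` along a map in `C` is in `W`. -/
def LeftProper (W C : MorphismProperty M) : Prop :=
  ∀ ⦃A X B P : M⦄ (f : A ⟶ X) (i : A ⟶ B) (inl : X ⟶ P) (inr : B ⟶ P),
    IsPushout f i inl inr → W f → C i → W inr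

/-- Right properness: the pullback of a map in `W` along a map in `F` is in `W`. -/
def RightProper (W F : MorphismProperty M) : Prop :=
  ∀ ⦃P X Y Z : M⦄ (fst : P ⟶ X) (snd : P ⟶ Y) (f : X ⟶ Z) (g : Y ⟶ Z),
    IsPullback fst snd f g → W f → F g → W snd

/-- A (Quillen) model structure on a category, given by classes `W` (weak
equivalences), `C` (cofibrations) and `F` (fibrations). -/
structure IsModelStructure (W C F : MorphismProperty M) : Prop where
  weq_twoOutOfThree : TwoOutOfThree W
  weq_retracts : ClosedUnderRetracts W
  cof_retracts : ClosedUnderRetracts C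
  fib_retracts : ClosedUnderRetracts F
  lift_trivCof_fib : ∀ ⦃A B X Y : M⦄ (i : A ⟶ B) (p : X ⟶ Y),
    C i → W i → F p → HasLiftingProperty i p
  lift_cof_trivFib : ∀ ⦃A B X Y : M⦄ (i : A ⟶ B) (p : X ⟶ Y),
    C i → F p → W p → HasLiftingProperty i p
  fact_cof_trivFib : ∀ ⦃X Y : M⦄ (f : X ⟶ Y),
    ∃ (Z : M) (i : X ⟶ Z) (p : Z ⟶ Y), C i ∧ F p ∧ W p ∧ i ≫ p = f
  fact_trivCof_fib : ∀ ⦃X Y : M⦄ (f : X ⟶ Y),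
    ∃ (Z : M) (i : X ⟶ Z) (p : Z ⟶ Y), C i ∧ W i ∧ F p ∧ i ≫ p = f

/-- Identities are weak equivalences: if `𝟙 X = i ≫ p` with `p` in `W`, then `𝟙 X` is a retract
of `p`. -/
lemma IsModelStructure.weq_id {W C F : MorphismProperty M} (hMS : IsModelStructure W C F) (X : M) :
    W (𝟙 X) := by
  obtain ⟨Z, i, p, -, -, hp, hip⟩ := hMS.fact_cof_trivFib (𝟙 X)
  exact hMS.weq_retracts (𝟙 X) p i p (𝟙 X) (𝟙 X) hip (by simp) (by simpa using hip.symm) (by simp) hp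

/-- The class `CG ∩ WG` is stable under pushout. A pushout of such a map lifts against `FG`, hence
is a retract of the first factor of its factorization as a map in `CG ∩ WG` followed by a map in
`FG`. -/
lemma trivCof_pushout {WG CG FG : MorphismProperty M}
    (h2W : ClosedUnderRetracts WG) (h2C : ClosedUnderRetracts CG)
    (h7 : ∀ ⦃A B X Y : M⦄ (j : A ⟶ B) (p : X ⟶ Y),
      CG j → WG j → FG p → HasLiftingProperty j p)
    (h8 : ∀ ⦃X Y : M⦄ (f : X ⟶ Y),
      ∃ (Z : M) (j : X ⟶ Z) (p : Z ⟶ Y), CG j ∧ WG j ∧ FG p ∧ j ≫ p = f)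
    {Z X Y P : M} {f : Z ⟶ X} {g : Z ⟶ Y} {inl : X ⟶ P} {inr : Y ⟶ P}
    (sq : IsPushout f g inl inr) (hC : CG f) (hW : WG f) : CG inr ∧ WG inr := by
  obtain ⟨T, j, p, hjC, hjW, hp, hjp⟩ := h8 inr
  have := h7 f p hC hW hp
  have := sq.flip.hasLiftingProperty p
  have lsq : CommSq j inr p (𝟙 P) := ⟨by simpa using hjp⟩
  exact
    ⟨h2C inr j (𝟙 Y) (𝟙 Y) lsq.lift p (by simp) lsq.fac_right (by simp) (by simpa using hjp) hjC,
      h2W inr j (𝟙 Y) (𝟙 Y) lsq.lift p (by simp) lsq.fac_right (by simp) (by simpa using hjp) hjW⟩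

/-- A map whose source admits a cylinder object factors through its mapping cylinder as a map in
`CG` followed by a map in `WG`, provided that `∅ ⟶ X` and `∅ ⟶ Y` are in `CG`. -/
lemma mappingCylinder_factorization [HasFiniteColimits M] {WG CG FG : MorphismProperty M}
    (hid : ∀ X : M, WG (𝟙 X))
    (h1 : TwoOutOfThree WG) (h2W : ClosedUnderRetracts WG) (h2C : ClosedUnderRetracts CG)
    (h3comp : ClosedUnderComposition CG) (h3push : ClosedUnderPushouts CG)
    (h7 : ∀ ⦃A B X Y : M⦄ (j : A ⟶ B) (p : X ⟶ Y),
      CG j → WG j → FG p → HasLiftingProperty j p)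
    (h8 : ∀ ⦃X Y : M⦄ (f : X ⟶ Y),
      ∃ (Z : M) (j : X ⟶ Z) (p : Z ⟶ Y), CG j ∧ WG j ∧ FG p ∧ j ≫ p = f)
    {X Y Cyl : M} (f : X ⟶ Y) (hX : CG (initial.to X)) (hY : CG (initial.to Y))
    {i : X ⨿ X ⟶ Cyl} {p : Cyl ⟶ X} (hi : CG i) (hp : WG p) (hip : i ≫ p = codiag X) :
    ∃ (Z : M) (j : X ⟶ Z) (q : Z ⟶ Y), CG j ∧ WG q ∧ j ≫ q = f := by
  have hend : CG (coprod.inl ≫ i) ∧ WG (coprod.inl ≫ i) := by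
    refine ⟨h3comp _ _ (h3push _ _ _ _ (IsPushout.of_hasBinaryCoproduct' X X).flip hX) hi,
      h1.2.2 _ p hp ?_⟩
    have : (coprod.inl ≫ i) ≫ p = 𝟙 X := by
      rw [Category.assoc, hip, coprod.inl_desc]
    rw [this]
    exact hid X
  have sq := IsPushout.of_hasPushout i (coprod.map f (𝟙 X))
  -- As `Y ⨿ X` is the pushout of `coprod.inl : X ⟶ X ⨿ X` along `f`, pasting with `sq` makes the
  -- mapping cylinder the pushout of the end `coprod.inl ≫ i` along `f`.
  have hY' := trivCof_pushout h2W h2C h7 h8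
    ((IsPushout.of_coprod_inl_with_id f X).flip.paste_vert sq.flip).flip hend.1 hend.2
  have w : i ≫ p ≫ f = coprod.map f (𝟙 X) ≫ coprod.desc (𝟙 Y) f := by
    rw [reassoc_of% hip]
    ext <;> simp
  refine ⟨_, coprod.inr ≫ pushout.inr i (coprod.map f (𝟙 X)), sq.desc (p ≫ f) _ w,
    h3comp _ _ (h3push _ _ _ _ (IsPushout.of_hasBinaryCoproduct' Y X) hY)
      (h3push _ _ _ _ sq hi),
    h1.2.1 _ _ hY'.2 ?_,
    by rw [Category.assoc, sq.inr_desc, coprod.inr_desc]⟩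
  rw [Category.assoc, sq.inr_desc, coprod.inl_desc]
  exact hid Y

/-- Under the hypotheses of Theorem 1.2, every map factors as a map in `C^G`
followed by a map in `F^G ∩ W^G`. -/
theorem cof_trivFib_factorization
    [HasFiniteLimits M] [HasFiniteColimits M]
    (W C F WG CG FG : MorphismProperty M)
    (hMS : IsModelStructure W C F)
    (hWsub : ∀ ⦃X Y : M⦄ (f : X ⟶ Y), W f → WG f)
    (hCsub : ∀ ⦃X Y : M⦄ (f : X ⟶ Y), CG f → C f)
    (hFsub : ∀ ⦃X Y : M⦄ (f : X ⟶ Y), FG f → F f)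
    (h1 : TwoOutOfThree WG)
    (h2W : ClosedUnderRetracts WG)
    (h2C : ClosedUnderRetracts CG)
    (h2F : ClosedUnderRetracts FG)
    (h3comp : ClosedUnderComposition CG)
    (h3push : ClosedUnderPushouts CG)
    (h4 : ∀ X : M, CG (initial.to X) ↔ C (initial.to X))
    (h5 : ∀ X : M, C (initial.to X) →
      ∃ (Cyl : M) (i : X ⨿ X ⟶ Cyl) (p : Cyl ⟶ X), CG i ∧ WG p ∧ i ≫ p = codiag X)
    (h6 : ∀ ⦃A X B P : M⦄ (f : A ⟶ X) (j : A ⟶ B) (inl : X ⟶ P) (inr : B ⟶ P),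
      IsPushout f j inl inr → W f → CG j →
      C (initial.to A) → C (initial.to B) → W inr)
    (h7 : ∀ ⦃A B X Y : M⦄ (j : A ⟶ B) (p : X ⟶ Y),
      CG j → WG j → FG p → HasLiftingProperty j p)
    (h8 : ∀ ⦃X Y : M⦄ (f : X ⟶ Y),
      ∃ (Z : M) (j : X ⟶ Z) (p : Z ⟶ Y), CG j ∧ WG j ∧ FG p ∧ j ≫ p = f) :
    ∀ ⦃X Y : M⦄ (f : X ⟶ Y),
      ∃ (Z : M) (i : X ⟶ Z) (q : Z ⟶ Y), CG i ∧ FG q ∧ WG q ∧ i ≫ q = f := by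
  intro X Y f
  suffices H : ∃ (P : M) (i : X ⟶ P) (q : P ⟶ Y), CG i ∧ WG q ∧ i ≫ q = f by
    obtain ⟨P, i, q, hi, hq, rfl⟩ := H
    obtain ⟨T, j, r, hjC, hjW, hr, rfl⟩ := h8 q
    exact ⟨T, i ≫ j, r, h3comp _ _ hi hjC, hr, h1.2.1 j r hjW hq, by simp⟩
  obtain ⟨X', iX, pX, hiX, -, hpX, -⟩ := hMS.fact_cof_trivFib (initial.to X)
  obtain ⟨Y', iY, pY, hiY, hpYF, hpY, -⟩ := hMS.fact_cof_trivFib (initial.to Y)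
  obtain rfl : iX = initial.to X' := Subsingleton.elim _ _
  obtain rfl : iY = initial.to Y' := Subsingleton.elim _ _
  have := hMS.lift_cof_trivFib (initial.to X') pY hiX hpYF hpY
  have lsq : CommSq (initial.to Y') (initial.to X') pY (pX ≫ f) := ⟨Subsingleton.elim _ _⟩
  obtain ⟨Cyl, i, p, hi, hp, hip⟩ := h5 X' hiX
  obtain ⟨Z', j, q, hj, hq, hjq⟩ := mappingCylinder_factorization
    (fun X => hWsub _ (hMS.weq_id X)) h1 h2W h2C h3comp h3push h7 h8 lsq.lift
    ((h4 X').2 hiX) ((h4 Y').2 hiY) hi hp hip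
  have hZ' : C (initial.to Z') := by
    rw [Subsingleton.elim (initial.to Z') (initial.to X' ≫ j)]
    exact hCsub _ (h3comp _ _ ((h4 X').2 hiX) hj)
  have sq := IsPushout.of_hasPushout pX j
  have w : pX ≫ f = j ≫ q ≫ pY := by rw [reassoc_of% hjq, lsq.fac_right]
  refine ⟨_, pushout.inl pX j, sq.desc f (q ≫ pY) w, h3push _ _ _ _ sq.flip hj,
    h1.2.1 (pushout.inr pX j) _ (hWsub _ (h6 _ _ _ _ sq hpX hj hiX hZ')) ?_, sq.inl_desc _ _ _⟩
  rw [sq.inr_desc]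
  exact h1.1 _ _ hq (hWsub _ hpY)

end LLExt
end

section
/- Let (W^G, C^G, F^G) be an ℓℓ-extension of a model structure (W,C,F) on a bicomplete category M. If (W,C,F) is right proper and the fibrant objects of (W,C,F) coincide with the G-fibrant objects (the fibrant objects of (W^G,C^G,F^G)), then (W^G, C^G, F^G) is right proper. -/
/-!
The proof rests on two facts valid in every model structure with pullbacks.

* `IsModelStructure.weq_baseChange`: a weak equivalence between two fibrations over `Z` stays a
  weak equivalence after base change along any `A ⟶ Z`. This is Ken Brown's factorization in the
  slice over `Z`: such a map is a section of a trivial fibration followed by a trivial fibration.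
* `IsModelStructure.weq_pullback_of_fibrant`: the base change along a fibration of a weak
  equivalence between fibrant objects is a weak equivalence.

Let `f : X ⟶ Z` be in `WG` and `g : Y ⟶ Z` in `FG`. Choose a fibrant replacement `z : Z ⟶ Z'` in
`(W, C, F)`, factor `f ≫ z` as a map `x : X ⟶ X'` of `W` followed by a map of `F`, and factor
`g ≫ z` as a map `Y ⟶ Y'` of `WG` followed by a map of `FG`. Right properness of `(W, C, F)` gives
that `Z ×_{Z'} Y' ⟶ Y'` is in `W`, so `Y ⟶ Z ×_{Z'} Y'` is in `WG`; both sides are `G`-fibrations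
over `Z`, so by the first fact `X ×_Z Y ⟶ X ×_{Z'} Y'` is in `WG`. Right properness
of `(W, C, F)` again gives that `X ×_{Z'} Y' ⟶ X' ×_{Z'} Y'` is in `W`. As `X'` and `Z'` are
fibrant, they are `G`-fibrant, and `X' ×_{Z'} Y' ⟶ Y'` is in `WG` by the second fact. The composite
`X ×_Z Y ⟶ Y'` factors as `X ×_Z Y ⟶ Y ⟶ Y'`, and two-out-of-three concludes.
-/

open CategoryTheory CategoryTheory.Limits

universe v u v' u'

namespace LLExt

variable {M : Type u} [Category.{v} M]

namespace IsModelStructure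

variable {W C F : MorphismProperty M}

lemma fib_eq_rlp (h : IsModelStructure W C F) : F = (C ⊓ W).rlp := by
  apply le_antisymm
  · intro X Y p hp A B i hi
    exact h.lift_trivCof_fib i p hi.1 hi.2 hp
  · intro X Y p hp
    obtain ⟨Z, i, q, hi, hi', hq, fac⟩ := h.fact_trivCof_fib p
    have := hp i ⟨hi, hi'⟩
    have sq : CommSq (𝟙 X) i p q := ⟨by simp [fac]⟩
    exact h.fib_retracts p q i sq.lift (𝟙 _) (𝟙 _) (by simp) (by simp) (by simp [fac])
      (by simp) hq

lemma trivFib_eq_rlp (h : IsModelStructure W C F) : F ⊓ W = C.rlp := by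
  apply le_antisymm
  · intro X Y p hp A B i hi
    exact h.lift_cof_trivFib i p hi hp.1 hp.2
  · intro X Y p hp
    obtain ⟨Z, i, q, hi, hq, hq', fac⟩ := h.fact_cof_trivFib p
    have := hp i hi
    have sq : CommSq (𝟙 X) i p q := ⟨by simp [fac]⟩
    exact ⟨h.fib_retracts p q i sq.lift (𝟙 _) (𝟙 _) (by simp) (by simp) (by simp [fac])
      (by simp) hq, h.weq_retracts p q i sq.lift (𝟙 _) (𝟙 _) (by simp) (by simp)
      (by simp [fac]) (by simp) hq'⟩

lemma fib_pullback (h : IsModelStructure W C F) : ClosedUnderPullbacks F := by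
  intro P X Y Z fst snd f g sq hf
  rw [h.fib_eq_rlp] at hf ⊢
  exact MorphismProperty.of_isPullback sq hf

lemma fib_comp (h : IsModelStructure W C F) : ClosedUnderComposition F := by
  intro X Y Z f g hf hg
  rw [h.fib_eq_rlp] at hf hg ⊢
  exact MorphismProperty.comp_mem _ _ _ hf hg

lemma trivFib_pullback (h : IsModelStructure W C F) : ClosedUnderPullbacks (F ⊓ W) := by
  intro P X Y Z fst snd f g sq hf
  rw [h.trivFib_eq_rlp] at hf ⊢
  exact MorphismProperty.of_isPullback sq hf

lemma weq_id_s11 (h : IsModelStructure W C F) (X : M) : W (𝟙 X) := by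
  obtain ⟨Z, i, p, -, -, hp, fac⟩ := h.fact_cof_trivFib (𝟙 X)
  exact h.weq_retracts (𝟙 X) p i p (𝟙 X) (𝟙 X) fac (by simp) (by simp [fac]) (by simp) hp

lemma weq_of_section (h : IsModelStructure W C F) {X Y : M} {s : X ⟶ Y} {r : Y ⟶ X}
    (hs : s ≫ r = 𝟙 X) (hr : W r) : W s :=
  h.weq_twoOutOfThree.2.2 s r hr (hs ▸ h.weq_id_s11 X)

/-- Ken Brown's factorization in the slice over `Z`: a weak equivalence `w` between fibrations
over `Z` is `t ≫ ρ₂` with `ρ₂` a trivial fibration and `t` a section of a trivial fibration `ρ₁`,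
all over `Z`. -/
lemma exists_brown_factorization [HasPullbacks M] (h : IsModelStructure W C F)
    {X₁ X₂ Z : M} {p₁ : X₁ ⟶ Z} {p₂ : X₂ ⟶ Z} {w : X₁ ⟶ X₂} (hw : w ≫ p₂ = p₁)
    (hp₁ : F p₁) (hp₂ : F p₂) (hwW : W w) :
    ∃ (R : M) (t : X₁ ⟶ R) (ρ₁ : R ⟶ X₁) (ρ₂ : R ⟶ X₂),
      t ≫ ρ₁ = 𝟙 X₁ ∧ t ≫ ρ₂ = w ∧ ρ₁ ≫ p₁ = ρ₂ ≫ p₂ ∧ (F ⊓ W) ρ₁ ∧ (F ⊓ W) ρ₂ := by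
  -- Factor the graph of `w` as a trivial cofibration followed by a fibration.
  obtain ⟨R, t, q, -, ht, hq, fac⟩ :=
    h.fact_trivCof_fib (pullback.lift (𝟙 X₁) w (by simp [hw]) : X₁ ⟶ pullback p₁ p₂)
  have e₁ : t ≫ q ≫ pullback.fst p₁ p₂ = 𝟙 X₁ := by
    rw [reassoc_of% fac]; exact pullback.lift_fst _ _ _
  have e₂ : t ≫ q ≫ pullback.snd p₁ p₂ = w := by
    rw [reassoc_of% fac]; exact pullback.lift_snd _ _ _
  refine ⟨R, t, q ≫ pullback.fst p₁ p₂, q ≫ pullback.snd p₁ p₂, e₁, e₂, ?_, ⟨?_, ?_⟩, ⟨?_, ?_⟩⟩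
  · simp [pullback.condition]
  · exact h.fib_comp _ _ hq (h.fib_pullback _ _ _ _ (IsPullback.of_hasPullback p₁ p₂).flip hp₂)
  · exact h.weq_twoOutOfThree.2.1 t _ ht (e₁ ▸ h.weq_id_s11 X₁)
  · exact h.fib_comp _ _ hq (h.fib_pullback _ _ _ _ (IsPullback.of_hasPullback p₁ p₂) hp₁)
  · exact h.weq_twoOutOfThree.2.1 t _ ht (e₂ ▸ hwW)

/-- A weak equivalence between fibrations over `Z` stays a weak equivalence after base change
along any map `a : A ⟶ Z`. -/
lemma weq_baseChange [HasPullbacks M] (h : IsModelStructure W C F)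
    {X₁ X₂ Z A T₁ T₂ : M} {p₁ : X₁ ⟶ Z} {p₂ : X₂ ⟶ Z} {w : X₁ ⟶ X₂} {a : A ⟶ Z}
    {f₁ : T₁ ⟶ X₁} {s₁ : T₁ ⟶ A} {f₂ : T₂ ⟶ X₂} {s₂ : T₂ ⟶ A} {k : T₁ ⟶ T₂}
    (sq₁ : IsPullback f₁ s₁ p₁ a) (sq₂ : IsPullback f₂ s₂ p₂ a)
    (hw : w ≫ p₂ = p₁) (hkf : k ≫ f₂ = f₁ ≫ w) (hks : k ≫ s₂ = s₁)
    (hp₁ : F p₁) (hp₂ : F p₂) (hwW : W w) : W k := by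
  obtain ⟨R, t, ρ₁, ρ₂, e₁, e₂, e, hρ₁, hρ₂⟩ := h.exists_brown_factorization hw hp₁ hp₂ hwW
  have sqR : IsPullback (pullback.fst ρ₁ f₁) (pullback.snd ρ₁ f₁) ρ₁ f₁ :=
    IsPullback.of_hasPullback _ _
  have sqRA := sqR.paste_vert sq₁
  have hcomm : (pullback.fst ρ₁ f₁ ≫ ρ₂) ≫ p₂ = (pullback.snd ρ₁ f₁ ≫ s₁) ≫ a := by
    rw [Category.assoc, ← e, sqRA.w]
  let r₂ : pullback ρ₁ f₁ ⟶ T₂ := sq₂.lift _ _ hcomm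
  have hr₂f : r₂ ≫ f₂ = pullback.fst ρ₁ f₁ ≫ ρ₂ := sq₂.lift_fst _ _ _
  have hr₂s : r₂ ≫ s₂ = pullback.snd ρ₁ f₁ ≫ s₁ := sq₂.lift_snd _ _ _
  have sqR₂ : IsPullback (pullback.fst ρ₁ f₁) r₂ ρ₂ f₂ := by
    refine IsPullback.of_bot ?_ hr₂f.symm sq₂
    rw [hr₂s, ← e]
    exact sqRA
  let t' : T₁ ⟶ pullback ρ₁ f₁ := pullback.lift (f₁ ≫ t) (𝟙 _) (by simp [e₁])
  have ht'f : t' ≫ pullback.fst ρ₁ f₁ = f₁ ≫ t := pullback.lift_fst _ _ _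
  have ht's : t' ≫ pullback.snd ρ₁ f₁ = 𝟙 _ := pullback.lift_snd _ _ _
  have hk : t' ≫ r₂ = k := by
    apply sq₂.hom_ext
    · rw [Category.assoc, hr₂f, reassoc_of% ht'f, e₂, hkf]
    · rw [Category.assoc, hr₂s, reassoc_of% ht's, hks]
  rw [← hk]
  exact h.weq_twoOutOfThree.1 _ _
    (h.weq_of_section ht's (h.trivFib_pullback _ _ _ _ sqR hρ₁).2)
    (h.trivFib_pullback _ _ _ _ sqR₂ hρ₂).2

/-- The base change along a fibration `e : E ⟶ P` of a section `t` of a trivial fibration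
`r : P ⟶ A` is a weak equivalence. -/
lemma weq_pullback_of_section [HasPullbacks M] (h : IsModelStructure W C F)
    {A P E S : M} {t : A ⟶ P} {r : P ⟶ A} {e : E ⟶ P} {fst : S ⟶ A} {m : S ⟶ E}
    (sq : IsPullback fst m t e) (htr : t ≫ r = 𝟙 A) (hr : (F ⊓ W) r) (he : F e) : W m := by
  -- The map `(e, 𝟙) : E ⟶ P ×_A E` is a weak equivalence between fibrations over `P`, and its
  -- base change along `t` is `m`, because `t^* (P ×_A E) = E`.
  have sqQ : IsPullback (pullback.fst r (e ≫ r)) (pullback.snd r (e ≫ r)) r (e ≫ r) :=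
    IsPullback.of_hasPullback _ _
  let w : E ⟶ pullback r (e ≫ r) := pullback.lift e (𝟙 E) (by simp)
  have hwf : w ≫ pullback.fst r (e ≫ r) = e := pullback.lift_fst _ _ _
  have hws : w ≫ pullback.snd r (e ≫ r) = 𝟙 E := pullback.lift_snd _ _ _
  let l : E ⟶ pullback r (e ≫ r) := pullback.lift (e ≫ r ≫ t) (𝟙 E) (by simp [htr])
  have hlf : l ≫ pullback.fst r (e ≫ r) = e ≫ r ≫ t := pullback.lift_fst _ _ _
  have hls : l ≫ pullback.snd r (e ≫ r) = 𝟙 E := pullback.lift_snd _ _ _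
  have sqt : IsPullback l (e ≫ r) (pullback.fst r (e ≫ r)) t := by
    refine IsPullback.of_right (h₁₂ := pullback.snd r (e ≫ r)) (h₂₂ := r) (v₁₃ := e ≫ r)
      ?_ (by simp [hlf]) sqQ.flip
    rw [hls, htr]
    exact IsPullback.of_horiz_isIso ⟨by simp⟩
  refine h.weq_baseChange (k := m) sq.flip sqt hwf ?_ ?_ he ?_ ?_
  · apply sqQ.hom_ext
    · rw [Category.assoc, Category.assoc, hlf, hwf, ← reassoc_of% sq.w, reassoc_of% htr, sq.w]
    · rw [Category.assoc, Category.assoc, hls, hws]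
  · rw [← reassoc_of% sq.w, htr, Category.comp_id]
  · exact h.fib_pullback _ _ _ _ sqQ.flip (h.fib_comp _ _ he hr.1)
  · exact h.weq_of_section hws (h.trivFib_pullback _ _ _ _ sqQ hr).2

/-- The base change along a fibration of a weak equivalence `f` between fibrant objects is a weak
equivalence: Ken Brown's factorization over the terminal object writes `f` as a section of a
trivial fibration followed by a trivial fibration, and each factor is pulled back separately. -/
lemma weq_pullback_of_fibrant [HasPullbacks M] [HasTerminal M] (h : IsModelStructure W C F)
    {S A B Y : M} {fst : S ⟶ A} {snd : S ⟶ Y} {f : A ⟶ B} {g : Y ⟶ B}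
    (sq : IsPullback fst snd f g) (hA : F (terminal.from A)) (hB : F (terminal.from B))
    (hf : W f) (hg : F g) : W snd := by
  obtain ⟨P, t, ρ₁, ρ₂, e₁, e₂, -, hρ₁, hρ₂⟩ :=
    h.exists_brown_factorization (w := f) (Subsingleton.elim _ _) hA hB hf
  have sqE : IsPullback (pullback.fst ρ₂ g) (pullback.snd ρ₂ g) ρ₂ g :=
    IsPullback.of_hasPullback _ _
  let m : S ⟶ pullback ρ₂ g := pullback.lift (fst ≫ t) snd (by simp [e₂, sq.w])
  have hmf : m ≫ pullback.fst ρ₂ g = fst ≫ t := pullback.lift_fst _ _ _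
  have hms : m ≫ pullback.snd ρ₂ g = snd := pullback.lift_snd _ _ _
  have sqm : IsPullback fst m t (pullback.fst ρ₂ g) := by
    refine IsPullback.of_bot ?_ hmf.symm sqE
    rw [hms, e₂]
    exact sq
  rw [← hms]
  exact h.weq_twoOutOfThree.1 _ _
    (h.weq_pullback_of_section sqm e₁ hρ₁ (h.fib_pullback _ _ _ _ sqE.flip hg))
    (h.trivFib_pullback _ _ _ _ sqE hρ₂).2

end IsModelStructure

/-- Proposition 2.5(2): if `M` is right proper and the fibrant objects coincide
with the `G`-fibrant objects, then the ℓℓ-extension is right proper. -/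
theorem llExtension_rightProper_of_rightProper
    [HasLimits M] [HasColimits M]
    (W C F WG CG FG : MorphismProperty M)
    (hMS : IsModelStructure W C F)
    (hG : IsModelStructure WG CG FG)
    (hWsub : ∀ ⦃X Y : M⦄ (f : X ⟶ Y), W f → WG f)
    (hCsub : ∀ ⦃X Y : M⦄ (f : X ⟶ Y), CG f → C f)
    (hFsub : ∀ ⦃X Y : M⦄ (f : X ⟶ Y), FG f → F f)
    (hrp : RightProper W F)
    (hfib : ∀ X : M, F (terminal.from X) ↔ FG (terminal.from X)) :
    RightProper WG FG := by
  intro P X Y Z fst snd f g sq hf hg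
  obtain ⟨Z', z, z', -, hz, hz', -⟩ := hMS.fact_trivCof_fib (terminal.from Z)
  obtain ⟨X', x, f', -, hx, hf', ef⟩ := hMS.fact_trivCof_fib (f ≫ z)
  obtain ⟨Y', y, g', -, hy, hg', eg⟩ := hG.fact_trivCof_fib (g ≫ z)
  have hZ' : F (terminal.from Z') := by rwa [Subsingleton.elim (terminal.from Z') z']
  have hX' : F (terminal.from X') := by
    rw [Subsingleton.elim (terminal.from X') (f' ≫ terminal.from Z')]
    exact hMS.fib_comp _ _ hf' hZ'
  have hf'W : WG f' := by
    refine hG.weq_twoOutOfThree.2.1 x f' (hWsub _ hx) ?_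
    rw [ef]
    exact hG.weq_twoOutOfThree.1 _ _ hf (hWsub _ hz)
  -- Compare `Y` with `Z ×_{Z'} Y'` over `Z`.
  have sqQ : IsPullback (pullback.fst z g') (pullback.snd z g') z g' :=
    IsPullback.of_hasPullback _ _
  let w : Y ⟶ pullback z g' := pullback.lift g y eg.symm
  have hwf : w ≫ pullback.fst z g' = g := pullback.lift_fst _ _ _
  have hws : w ≫ pullback.snd z g' = y := pullback.lift_snd _ _ _
  have hw : WG w := hG.weq_twoOutOfThree.2.2 w (pullback.snd z g')
    (hWsub _ (hrp _ _ _ _ sqQ hz (hFsub _ hg'))) (by rwa [hws])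
  -- The base change of this comparison along `f`; by pasting, its target is `X ×_{Z'} Y'`.
  have sqT : IsPullback (pullback.fst (pullback.fst z g') f) (pullback.snd (pullback.fst z g') f)
      (pullback.fst z g') f := IsPullback.of_hasPullback _ _
  generalize pullback.fst (pullback.fst z g') f = q at sqT
  generalize pullback.snd (pullback.fst z g') f = c at sqT
  let k := sqT.lift (snd ≫ w) fst (by simp [hwf, sq.w])
  have hkq : k ≫ q = snd ≫ w := sqT.lift_fst _ _ _
  have hkc : k ≫ c = fst := sqT.lift_snd _ _ _
  have hk : WG k := hG.weq_baseChange sq.flip sqT hwf hkq hkc hg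
    (hG.fib_pullback _ _ _ _ sqQ.flip hg') hw
  -- Compare `X ×_{Z'} Y'` with `X' ×_{Z'} Y'`.
  have sqE : IsPullback (pullback.fst f' g') (pullback.snd f' g') f' g' :=
    IsPullback.of_hasPullback _ _
  have sqTY := (sqT.paste_horiz sqQ.flip).flip
  let u : _ ⟶ pullback f' g' := pullback.lift (c ≫ x) (q ≫ pullback.snd z g')
    (by rw [Category.assoc, ef, sqTY.w])
  have huf : u ≫ pullback.fst f' g' = c ≫ x := pullback.lift_fst _ _ _
  have hus : u ≫ pullback.snd f' g' = q ≫ pullback.snd z g' := pullback.lift_snd _ _ _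
  have squ : IsPullback c u x (pullback.fst f' g') := by
    refine IsPullback.of_bot ?_ huf.symm sqE
    rw [hus, ef]
    exact sqTY
  have hu : WG u :=
    hWsub _ (hrp _ _ _ _ squ hx (hMS.fib_pullback _ _ _ _ sqE.flip (hFsub _ hg')))
  have hE : WG (pullback.snd f' g') :=
    hG.weq_pullback_of_fibrant sqE ((hfib _).1 hX') ((hfib _).1 hZ') hf'W hg'
  refine hG.weq_twoOutOfThree.2.2 snd y hy ?_
  have key : snd ≫ y = k ≫ u ≫ pullback.snd f' g' := by
    rw [hus, reassoc_of% hkq, hws]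
  rw [key]
  exact hG.weq_twoOutOfThree.1 _ _ hk (hG.weq_twoOutOfThree.1 _ _ hu hE)

end LLExt
end

section
/- Let (W^G, C^G, F^G) be an ℓℓ-extension of a model structure (W,C,F) on a bicomplete category M. Let f : X → Z, g : Y → Z and h : X → Y be maps with f = g∘h, where f is in F, g is in F^G and h is in W. Then f is in F^G. -/
/-!
Factor `h = i ≫ p` with `i` in `C ∩ W` and `p` in `F`; by two-out-of-three `p` is in `F ∩ W`.
Since `f` is in `F`, the map `i` lifts against `f`, which exhibits `f` as a retract of `p ≫ g`
over `Z`. It remains to see that `p ≫ g` is in `FG`. Fibrations of a model structure are exactly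
the maps with the right lifting property against trivial cofibrations
(`IsModelStructure.fib_of_rlp`), so `FG` is closed under composition, and
`F ∩ W ⊆ FG` because `CG ⊆ C`.
-/

open CategoryTheory CategoryTheory.Limits

universe v u v' u'

namespace LLExt

variable {M : Type u} [Category.{v} M]

/-- The retract argument: if `q = j ≫ p` and `j` lifts against `q`, then `q` is a retract of `p`. -/
lemma ClosedUnderRetracts.of_lift {K : MorphismProperty M} (hK : ClosedUnderRetracts K)
    {X E Z : M} (q : X ⟶ Z) (j : X ⟶ E) (p : E ⟶ Z) (fac : j ≫ p = q)
    (hl : HasLiftingProperty j q) (hp : K p) : K q := by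
  have sq : CommSq (𝟙 X) j q p := ⟨by simp [fac]⟩
  exact hK q p j sq.lift (𝟙 Z) (𝟙 Z) sq.fac_left (by simp) (by simp [fac])
    (by simp [sq.fac_right]) hp

lemma IsModelStructure.fib_of_rlp {W C F : MorphismProperty M} (hMS : IsModelStructure W C F)
    {X Y : M} (q : X ⟶ Y)
    (hq : ∀ ⦃A B : M⦄ (i : A ⟶ B), C i → W i → HasLiftingProperty i q) : F q := by
  obtain ⟨E, j, p, hjC, hjW, hp, fac⟩ := hMS.fact_trivCof_fib q
  exact hMS.fib_retracts.of_lift q j p fac (hq j hjC hjW) hp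

/-- Proposition 2.6(1), first part. -/
theorem prop_2_6_1_first
    [HasLimits M] [HasColimits M]
    (W C F WG CG FG : MorphismProperty M)
    (hMS : IsModelStructure W C F)
    (hG : IsModelStructure WG CG FG)
    (hWsub : ∀ ⦃X Y : M⦄ (f : X ⟶ Y), W f → WG f)
    (hCsub : ∀ ⦃X Y : M⦄ (f : X ⟶ Y), CG f → C f)
    (hFsub : ∀ ⦃X Y : M⦄ (f : X ⟶ Y), FG f → F f) :
    ∀ ⦃X Y Z : M⦄ (f : X ⟶ Z) (g : Y ⟶ Z) (h : X ⟶ Y),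
      f = h ≫ g → F f → FG g → W h → FG f := by
  intro X Y Z f g h hf hfF hg hh
  obtain ⟨E, i, p, hiC, hiW, hpF, fac⟩ := hMS.fact_trivCof_fib h
  have hpW : W p := hMS.weq_twoOutOfThree.2.1 i p hiW (fac ▸ hh)
  have hpg : FG (p ≫ g) := hG.fib_of_rlp _ fun A B k hkC hkW => by
    have := hMS.lift_cof_trivFib k p (hCsub k hkC) hpF hpW
    have := hG.lift_trivCof_fib k g hkC hkW hg
    infer_instance
  exact hG.fib_retracts.of_lift f i (p ≫ g) (by rw [hf, ← fac, Category.assoc])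
    (hMS.lift_trivCof_fib i f hiC hiW hfF) hpg

end LLExt
end
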